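/- Let D ≤ s ≤ ⌊t/2⌋, let L* be a generic element of K_{t,⪰}, and let G_t = H_t ∪ W_t. Then the rank condition rank M_s(L*) = rank M_{s−1}(L*) holds if and only if both dim π_{2s}(G_t^⊥) = dim π_{s−1}(G_t^⊥) and dim π_{2s}(G_t^⊥) = dim π_{2s}((G_t^+)^⊥) hold; and these conditions imply dim π_s(G_t^⊥) = dim π_{s−1}(G_t^⊥) and dim π_s(G_t^⊥) = dim π_s((G_t^+)^⊥). -/

import Mathlib

open MvPolynomial

noncomputable section

/-- The polynomial ring `ℝ[x₁,…,xₙ]`. -/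
abbrev MP (n : ℕ) := MvPolynomial (Fin n) ℝ

/-- The total degree `|α|` of a monomial exponent `α`. -/
def mdeg {n : ℕ} (α : Fin n →₀ ℕ) : ℕ := α.sum fun _ e => e

/-- The subspace `ℝ[x]_t` of polynomials of total degree at most `t`. -/
abbrev RxT (n t : ℕ) : Submodule ℝ (MP n) := restrictTotalDegree (Fin n) ℝ t

/-- The kernel of the moment matrix `M_s(L)`: polynomials `p` of degree at most `s` such that
`L(p·x^β) = 0` for all monomials `x^β` of degree at most `s`. -/
def momKer {n : ℕ} (L : Module.Dual ℝ (MP n)) (s : ℕ) : Set (MP n) :=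
  {p | p.totalDegree ≤ s ∧ ∀ β : Fin n →₀ ℕ, mdeg β ≤ s → L (p * monomial β 1) = 0}

/-- Positive semidefiniteness of the moment matrix `M_t(L)`: `L(p²) ≥ 0` for all `p ∈ ℝ[x]_t`. -/
def momPSD {n : ℕ} (L : Module.Dual ℝ (MP n)) (t : ℕ) : Prop :=
  ∀ p : MP n, p.totalDegree ≤ t → 0 ≤ L (p * p)

/-- The bilinear/moment form of order `s` associated to `L`, as a map `ℝ[x]_s → (ℝ[x]_s)*`;
its matrix in the monomial basis is the moment matrix `M_s(L)`. -/
def momBil {n : ℕ} (L : Module.Dual ℝ (MP n)) (s : ℕ) :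
    RxT n s →ₗ[ℝ] Module.Dual ℝ (RxT n s) :=
  LinearMap.mk₂ ℝ (fun p q => L ((p : MP n) * (q : MP n)))
    (fun p p' q => by simp [add_mul])
    (fun c p q => by simp [smul_mul_assoc])
    (fun p q q' => by simp [mul_add])
    (fun c p q => by simp [mul_smul_comm])

/-- The rank of the moment matrix `M_s(L)`. -/
def momRank {n : ℕ} (L : Module.Dual ℝ (MP n)) (s : ℕ) : ℕ :=
  Module.finrank ℝ (LinearMap.range (momBil L s))

/-- The column of the moment matrix `M_s(L)` indexed by the monomial `β`. -/
def momCol {n : ℕ} (L : Module.Dual ℝ (MP n)) (s : ℕ) (β : Fin n →₀ ℕ) :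
    {α : Fin n →₀ ℕ // mdeg α ≤ s} → ℝ :=
  fun α => L (monomial (α.1 + β) 1)

/-- `G^⊥`: linear functionals vanishing on the set `G`. -/
def annih {n : ℕ} (G : Set (MP n)) : Submodule ℝ (Module.Dual ℝ (MP n)) :=
  (Submodule.span ℝ G).dualAnnihilator

/-- The projection `π_s` sending a linear functional to its restriction to `ℝ[x]_s`. -/
def projDual (n s : ℕ) : Module.Dual ℝ (MP n) →ₗ[ℝ] Module.Dual ℝ (RxT n s) :=
  (RxT n s).subtype.dualMap

/-- `dim π_s(G^⊥)`. -/
def dimProj {n : ℕ} (s : ℕ) (G : Set (MP n)) : ℕ :=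
  Module.finrank ℝ (Submodule.map (projDual n s) (annih G))

/-- The one-degree prolongation `S⁺ = S ∪ x₁S ∪ … ∪ xₙS` of a set of polynomials. -/
def plusOp {n : ℕ} (G : Set (MP n)) : Set (MP n) :=
  G ∪ ⋃ i : Fin n, (fun p => X i * p) '' G

/-- The set `H_t = {x^α h_j : |α| + deg h_j ≤ t}` of prolongations of the generators. -/
def Hset {n m : ℕ} (h : Fin m → MP n) (t : ℕ) : Set (MP n) :=
  {p | ∃ (α : Fin n →₀ ℕ) (j : Fin m), mdeg α + (h j).totalDegree ≤ t ∧ p = monomial α 1 * h j}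

/-- The cone `K_{t,⪰}` of linear functionals vanishing on `H_t` with `M_{⌊t/2⌋}(L) ⪰ 0`. -/
def Kpos {n m : ℕ} (h : Fin m → MP n) (t : ℕ) : Set (Module.Dual ℝ (MP n)) :=
  {L | (∀ g ∈ Hset h t, L g = 0) ∧ momPSD L (t / 2)}

/-- `L*` is generic in `K_{t,⪰}`: it belongs to `K_{t,⪰}` and its moment matrix
`M_{⌊t/2⌋}(L*)` has maximum rank over `K_{t,⪰}`. -/
def Generic {n m : ℕ} (h : Fin m → MP n) (t : ℕ) (Ls : Module.Dual ℝ (MP n)) : Prop :=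
  Ls ∈ Kpos h t ∧ ∀ L ∈ Kpos h t, momRank L (t / 2) ≤ momRank Ls (t / 2)

/-- `W_t = {x^α g : |α| ≤ ⌊t/2⌋, g ∈ N_t}`, with `N_t = Ker M_{⌊t/2⌋}(L*)` for `L*` generic. -/
def Wset {n m : ℕ} (h : Fin m → MP n) (t : ℕ) (Ls : Module.Dual ℝ (MP n)) : Set (MP n) :=
  {p | ∃ (α : Fin n →₀ ℕ) (g : MP n), mdeg α ≤ t / 2 ∧ g ∈ momKer Ls (t / 2) ∧
    p = monomial α 1 * g}

/-- The real radical `√[ℝ]I` of an ideal `I`. -/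
def realRad {n : ℕ} (I : Ideal (MP n)) : Set (MP n) :=
  {p | ∃ m : ℕ, 0 < m ∧ ∃ (k : ℕ) (q : Fin k → MP n), p ^ (2 * m) + ∑ j, q j ^ 2 ∈ I}

/-- A set of monomials closed under taking divisions. -/
def DivClosed {n : ℕ} (B : Set (Fin n →₀ ℕ)) : Prop :=
  ∀ a ∈ B, ∀ a' : Fin n →₀ ℕ, a' ≤ a → a' ∈ B

/-- A set of monomials connected to 1: each `m ∈ B` is a product `m = m₁⋯m_k` with `m₁ = 1`
and all partial products `m₁⋯m_h ∈ B` (written additively on exponents). -/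
def ConnectedToOne {n : ℕ} (B : Set (Fin n →₀ ℕ)) : Prop :=
  ∀ a ∈ B, ∃ (k : ℕ) (c : Fin (k + 1) → (Fin n →₀ ℕ)),
    c 0 = 0 ∧ (∀ j : Fin (k + 1), (∑ i ∈ Finset.univ.filter (· ≤ j), c i) ∈ B) ∧
    (∑ i, c i) = a

/-- `Span_ℝ(B)` for a set `B` of monomials. -/
def spanMon {n : ℕ} (B : Set (Fin n →₀ ℕ)) : Submodule ℝ (MP n) :=
  Submodule.span ℝ ((fun a => (monomial a 1 : MP n)) '' B)

/-- The border `∂B = B⁺ \ B` of a set of monomials. -/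
def borderSet {n : ℕ} (B : Set (Fin n →₀ ℕ)) : Set (Fin n →₀ ℕ) :=
  {a | a ∉ B ∧ ∃ i : Fin n, ∃ b ∈ B, a = b + Finsupp.single i 1}

end
lemma aux_mdeg_add {n : ℕ} (a b : Fin n →₀ ℕ) : mdeg (a + b) = mdeg a + mdeg b := by
  unfold mdeg; exact Finsupp.sum_add_index' (by simp) (by simp)

lemma aux_mdeg_single {n : ℕ} (i : Fin n) : mdeg (Finsupp.single i 1) = 1 := by
  unfold mdeg; simp

lemma aux_mdeg_zero {n : ℕ} : mdeg (0 : Fin n →₀ ℕ) = 0 := by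
  unfold mdeg; simp

lemma aux_split_one {n : ℕ} (a : Fin n →₀ ℕ) (ha : a ≠ 0) :
    ∃ i b, a = b + Finsupp.single i 1 := by
  obtain ⟨i, hi⟩ := Finsupp.ne_iff.mp ha
  refine ⟨i, a - Finsupp.single i 1, ?_⟩
  rw [tsub_add_cancel_of_le]
  simp only [Finsupp.single_le_iff]
  simp at hi; omega

lemma aux_split {n : ℕ} (a b : ℕ) : ∀ γ : Fin n →₀ ℕ, mdeg γ ≤ a + b →
    ∃ β δ, γ = β + δ ∧ mdeg β ≤ a ∧ mdeg δ ≤ b := by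
  induction a with
  | zero => intro γ _; exact ⟨0, γ, by simp, by simp [aux_mdeg_zero], by omega⟩
  | succ a ih =>
    intro γ h
    by_cases hγ : γ = 0
    · exact ⟨0, 0, by simp [hγ], by simp [aux_mdeg_zero], by simp [aux_mdeg_zero]⟩
    obtain ⟨i, c, rfl⟩ := aux_split_one γ hγ
    rw [aux_mdeg_add, aux_mdeg_single] at h
    obtain ⟨β, δ, rfl, h1, h2⟩ := ih c (by omega)
    exact ⟨β + Finsupp.single i 1, δ, by abel, by rw [aux_mdeg_add, aux_mdeg_single]; omega, h2⟩

lemma aux_deg_mon {n : ℕ} (a : Fin n →₀ ℕ) : (monomial a (1 : ℝ)).totalDegree = mdeg a :=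
  totalDegree_monomial a one_ne_zero

/-- A linear functional vanishing on monomials of degree `≤ s` vanishes on `R_s`. -/
lemma aux_mon_ext {n : ℕ} {V : Type*} [AddCommGroup V] [Module ℝ V] (L : MP n →ₗ[ℝ] V) (s : ℕ)
    (h : ∀ a : Fin n →₀ ℕ, mdeg a ≤ s → L (monomial a 1) = 0) (p : MP n)
    (hp : p.totalDegree ≤ s) : L p = 0 := by
  rw [p.as_sum, map_sum]
  refine Finset.sum_eq_zero fun a ha => ?_
  have : monomial a (p.coeff a) = p.coeff a • (monomial a 1 : MP n) := by
    rw [smul_monomial]; simp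
  rw [this, map_smul, h a ((le_totalDegree ha).trans hp), smul_zero]

lemma aux_mem_momKer {n : ℕ} (L : Module.Dual ℝ (MP n)) (s : ℕ) (p : MP n) :
    p ∈ momKer L s ↔ p.totalDegree ≤ s ∧ ∀ q : MP n, q.totalDegree ≤ s → L (p * q) = 0 := by
  constructor
  · rintro ⟨h1, h2⟩
    exact ⟨h1, fun q hq => aux_mon_ext (L ∘ₗ LinearMap.mulLeft ℝ p) s h2 q hq⟩
  · rintro ⟨h1, h2⟩
    exact ⟨h1, fun b hb => h2 _ (by rwa [aux_deg_mon])⟩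

lemma aux_psd {n : ℕ} (L : Module.Dual ℝ (MP n)) (d : ℕ) (hL : momPSD L d) (p q : MP n)
    (hp : p.totalDegree ≤ d) (hq : q.totalDegree ≤ d) (h0 : L (p * p) = 0) : L (p * q) = 0 := by
  have key : ∀ c : ℝ, 0 ≤ L (q * q) + 2 * c * L (p * q) := by
    intro c
    have h1 := hL (q + c • p) ((mem_restrictTotalDegree _ _ _).1 (Submodule.add_mem _
      ((mem_restrictTotalDegree _ _ _).2 hq)
      (Submodule.smul_mem _ c ((mem_restrictTotalDegree _ _ _).2 hp))))
    have h2 : (q + c • p) * (q + c • p) = q * q + (2 * c) • (p * q) + (c * c) • (p * p) := by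
      simp only [smul_eq_C_mul, map_mul]
      rw [show (C (2:ℝ) : MP n) = 2 from map_ofNat C 2]; ring
    rw [h2] at h1
    simpa [h0] using h1
  by_contra hne
  have := key (-(L (q * q) + 1) / (2 * L (p * q)))
  have h3 : 2 * (-(L (q * q) + 1) / (2 * L (p * q))) * L (p * q) = -(L (q * q) + 1) := by
    field_simp
  rw [h3] at this; linarith

lemma aux_momBil {n : ℕ} (L : Module.Dual ℝ (MP n)) (s : ℕ) (p q : RxT n s) :
    momBil L s p q = L ((p : MP n) * q) := rfl

lemma aux_ker_momBil {n : ℕ} (L : Module.Dual ℝ (MP n)) (s : ℕ) (p : RxT n s) :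
    p ∈ LinearMap.ker (momBil L s) ↔ (p : MP n) ∈ momKer L s := by
  rw [aux_mem_momKer, LinearMap.mem_ker]
  constructor
  · intro h
    refine ⟨(mem_restrictTotalDegree _ _ _).1 p.2, fun q hq => ?_⟩
    exact LinearMap.congr_fun h ⟨q, (mem_restrictTotalDegree _ _ _).2 hq⟩
  · rintro ⟨-, h⟩
    ext q
    exact h q ((mem_restrictTotalDegree _ _ _).1 q.2)

lemma aux_momKer_psd {n : ℕ} (L : Module.Dual ℝ (MP n)) (d : ℕ) (hL : momPSD L d) (p : MP n)
    (hp : p.totalDegree ≤ d) : p ∈ momKer L d ↔ L (p * p) = 0 := by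
  rw [aux_mem_momKer]
  exact ⟨fun h => h.2 p hp, fun h => ⟨hp, fun q hq => aux_psd L d hL p q hp hq h⟩⟩

lemma aux_generic {n m t : ℕ} (h : Fin m → MP n) (Ls L : Module.Dual ℝ (MP n))
    (hg : Generic h t Ls) (hL : L ∈ Kpos h t) : momKer Ls (t / 2) ⊆ momKer L (t / 2) := by
  set d := t / 2
  have hsum : Ls + L ∈ Kpos h t := by
    refine ⟨fun g hg' => ?_, fun p hp => ?_⟩
    · simp [hg.1.1 g hg', hL.1 g hg']
    · exact add_nonneg (hg.1.2 p hp) (hL.2 p hp)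
  have hr := hg.2 _ hsum
  have hker : ∀ p : RxT n d, p ∈ LinearMap.ker (momBil (Ls + L) d) →
      (p : MP n) ∈ momKer Ls d ∧ (p : MP n) ∈ momKer L d := by
    intro p hp
    have hpd := (mem_restrictTotalDegree _ _ _).1 p.2
    rw [aux_ker_momBil, aux_momKer_psd _ _ hsum.2 _ hpd] at hp
    have h1 := hg.1.2 p hpd
    have h2 := hL.2 p hpd
    rw [LinearMap.add_apply] at hp
    rw [aux_momKer_psd _ _ hg.1.2 _ hpd, aux_momKer_psd _ _ hL.2 _ hpd]
    constructor <;> linarith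
  have hle : LinearMap.ker (momBil (Ls + L) d) ≤ LinearMap.ker (momBil Ls d) :=
    fun p hp => (aux_ker_momBil _ _ _).2 (hker p hp).1
  have e1 := LinearMap.finrank_range_add_finrank_ker (momBil (Ls + L) d)
  have e2 := LinearMap.finrank_range_add_finrank_ker (momBil Ls d)
  have hr2 : Module.finrank ℝ (LinearMap.range (momBil (Ls + L) d)) ≤
      Module.finrank ℝ (LinearMap.range (momBil Ls d)) := hr
  have heq := Submodule.eq_of_le_of_finrank_le hle (by omega)
  intro p hp
  have hpd := hp.1
  exact (hker ⟨p, (mem_restrictTotalDegree _ _ _).2 hpd⟩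
    (heq ▸ (aux_ker_momBil Ls d ⟨p, _⟩).2 hp)).2

lemma aux_finrank {V V1 V2 : Type*} [AddCommGroup V] [Module ℝ V] [AddCommGroup V1] [Module ℝ V1]
    [AddCommGroup V2] [Module ℝ V2] [FiniteDimensional ℝ V1] (A : Submodule ℝ V)
    (f : V →ₗ[ℝ] V1) (g : V →ₗ[ℝ] V2) (r : V1 →ₗ[ℝ] V2) (hr : g = r ∘ₗ f) :
    Module.finrank ℝ (A.map g) ≤ Module.finrank ℝ (A.map f) ∧
    (Module.finrank ℝ (A.map f) = Module.finrank ℝ (A.map g) ↔ ∀ x ∈ A, g x = 0 → f x = 0) := by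
  subst hr
  rw [Submodule.map_comp]
  have e := LinearMap.finrank_range_add_finrank_ker (r.domRestrict (A.map f))
  rw [LinearMap.range_domRestrict] at e
  refine ⟨by omega, ?_⟩
  have : (Module.finrank ℝ (A.map f) = Module.finrank ℝ ((A.map f).map r)) ↔
      LinearMap.ker (r.domRestrict (A.map f)) = ⊥ := by
    rw [← Submodule.finrank_eq_zero]; omega
  rw [this]
  constructor
  · intro hk x hx hgx
    have : (⟨f x, Submodule.mem_map_of_mem hx⟩ : A.map f) ∈ LinearMap.ker (r.domRestrict (A.map f)) := by
      simpa using hgx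
    rw [hk] at this
    simpa using this
  · intro hx
    rw [eq_bot_iff]
    rintro ⟨y, x, hxA, rfl⟩ hy
    have := hx x hxA (by simpa using hy)
    simpa [Submodule.mem_bot, Subtype.ext_iff] using this

lemma aux_dimProj {n : ℕ} (a b : ℕ) (hab : a ≤ b) (G : Set (MP n)) :
    dimProj a G ≤ dimProj b G ∧ (dimProj b G = dimProj a G ↔
      ∀ Λ ∈ annih G, (∀ p : MP n, p.totalDegree ≤ a → Λ p = 0) →
        ∀ p : MP n, p.totalDegree ≤ b → Λ p = 0) := by
  have hle : RxT n a ≤ RxT n b := fun p hp => by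
    rw [mem_restrictTotalDegree] at *; omega
  have := aux_finrank (annih G) (projDual n b) (projDual n a)
    ((Submodule.inclusion hle).dualMap) (by ext; rfl)
  refine ⟨this.1, this.2.trans ?_⟩
  have hz : ∀ (c : ℕ) (Λ : Module.Dual ℝ (MP n)), projDual n c Λ = 0 ↔
      ∀ p : MP n, p.totalDegree ≤ c → Λ p = 0 := by
    intro c Λ
    constructor
    · intro h p hp
      exact LinearMap.congr_fun h ⟨p, (mem_restrictTotalDegree _ _ _).2 hp⟩
    · intro h; ext p; exact h p ((mem_restrictTotalDegree _ _ _).1 p.2)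
  simp only [hz]

lemma aux_mem_annih {n : ℕ} (G : Set (MP n)) (Λ : Module.Dual ℝ (MP n)) :
    Λ ∈ annih G ↔ ∀ g ∈ G, Λ g = 0 := by
  unfold annih
  rw [Submodule.mem_dualAnnihilator]
  constructor
  · intro h g hg; exact h g (Submodule.subset_span hg)
  · intro h w hw
    exact (Submodule.span_le (p := LinearMap.ker Λ)).2 h hw

lemma aux_dimProj_anti {n : ℕ} (a : ℕ) (G G' : Set (MP n)) (hG : G ⊆ G') :
    dimProj a G' ≤ dimProj a G ∧ (dimProj a G = dimProj a G' →
      ∀ Λ ∈ annih G, ∃ Λ' ∈ annih G', ∀ p : MP n, p.totalDegree ≤ a → Λ' p = Λ p) := by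
  have hle : (annih G').map (projDual n a) ≤ (annih G).map (projDual n a) := by
    apply Submodule.map_mono
    intro Λ; simp only [aux_mem_annih]; exact fun h g hg => h g (hG hg)
  refine ⟨Submodule.finrank_mono hle, fun h Λ hΛ => ?_⟩
  have heq := Submodule.eq_of_le_of_finrank_eq hle h.symm
  have : projDual n a Λ ∈ (annih G').map (projDual n a) := heq ▸ Submodule.mem_map_of_mem hΛ
  obtain ⟨Λ', h1, h2⟩ := this
  exact ⟨Λ', h1, fun p hp => LinearMap.congr_fun h2 ⟨p, (mem_restrictTotalDegree _ _ _).2 hp⟩⟩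

/-- flatness -/
lemma aux_flat_iff {n : ℕ} (L : Module.Dual ℝ (MP n)) (s a : ℕ) (has : a ≤ s) (hL : momPSD L s) :
    momRank L s = momRank L a ↔ ∀ p : MP n, p.totalDegree ≤ s → ∃ q : MP n, q.totalDegree ≤ a ∧
      p - q ∈ momKer L s := by
  have hle : RxT n a ≤ RxT n s := fun p hp => by
    rw [mem_restrictTotalDegree] at *; omega
  have hLa : momPSD L a := fun p hp => hL p (by omega)
  set f := momBil L s ∘ₗ Submodule.inclusion hle with hf
  have hk : LinearMap.ker f = LinearMap.ker (momBil L a) := by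
    ext p
    have hp := (mem_restrictTotalDegree _ _ _).1 p.2
    rw [aux_ker_momBil, aux_momKer_psd _ _ hLa _ hp, ← aux_momKer_psd L s hL _ (hp.trans has)]
    exact aux_ker_momBil L s (Submodule.inclusion hle p)
  have e1 := LinearMap.finrank_range_add_finrank_ker f
  have e2 := LinearMap.finrank_range_add_finrank_ker (momBil L a)
  rw [hk] at e1
  have e3 : momRank L a = Module.finrank ℝ (LinearMap.range f) := by unfold momRank; omega
  have hrl : LinearMap.range f ≤ LinearMap.range (momBil L s) := LinearMap.range_comp_le_range _ _
  rw [e3]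
  unfold momRank
  constructor
  · intro h p hp
    have heq := Submodule.eq_of_le_of_finrank_eq hrl h.symm
    have : momBil L s ⟨p, (mem_restrictTotalDegree _ _ _).2 hp⟩ ∈ LinearMap.range f :=
      heq ▸ LinearMap.mem_range_self _ _
    obtain ⟨q, hq⟩ := this
    refine ⟨q, (mem_restrictTotalDegree _ _ _).1 q.2, ?_⟩
    have h3 : (⟨p, (mem_restrictTotalDegree _ _ _).2 hp⟩ : RxT n s) - Submodule.inclusion hle q ∈
        LinearMap.ker (momBil L s) := by
      rw [LinearMap.mem_ker, map_sub, ← hq]; simp [hf]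
    exact (aux_ker_momBil L s _).1 h3
  · intro h
    refine le_antisymm (Submodule.finrank_mono ?_) (Submodule.finrank_mono hrl)
    rintro _ ⟨p, rfl⟩
    obtain ⟨q, hq, hpq⟩ := h p ((mem_restrictTotalDegree _ _ _).1 p.2)
    refine ⟨⟨q, (mem_restrictTotalDegree _ _ _).2 hq⟩, ?_⟩
    have := (aux_ker_momBil L s (p - Submodule.inclusion hle ⟨q, (mem_restrictTotalDegree _ _ _).2 hq⟩)).2 hpq
    rw [LinearMap.mem_ker, map_sub, sub_eq_zero] at this
    exact this.symm

lemma aux_aeval {n : ℕ} {B : Type*} [AddCommGroup B] [Module ℝ B] (T : Fin n → Module.End ℝ B)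
    (hT : ∀ i j, T i * T j = T j * T i) :
    ∃ φ : MP n →ₐ[ℝ] Module.End ℝ B, ∀ i, φ (X i) = T i := by
  have hc : ∀ a ∈ Set.range T, ∀ b ∈ Set.range T, a * b = b * a := by
    rintro _ ⟨i, rfl⟩ _ ⟨j, rfl⟩; exact hT i j
  letI := Algebra.adjoinCommRingOfComm ℝ hc
  refine ⟨(Algebra.adjoin ℝ (Set.range T)).val.comp
    (aeval (R := ℝ) (fun i => (⟨T i, Algebra.subset_adjoin ⟨i, rfl⟩⟩ : Algebra.adjoin ℝ (Set.range T)))), ?_⟩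
  intro i
  rw [AlgHom.comp_apply, aeval_X]
  rfl

lemma aux_flat_ext_pos {n : ℕ} (L : Module.Dual ℝ (MP n)) (s : ℕ) (hL : momPSD L (s + 1))
    (hflat : ∀ p : MP n, p.totalDegree ≤ s + 1 → ∃ q : MP n, q.totalDegree ≤ s ∧
      p - q ∈ momKer L (s + 1)) :
    ∃ L' : Module.Dual ℝ (MP n), (∀ f : MP n, f.totalDegree ≤ 2 * (s + 1) → L' f = L f) ∧
      (∀ f, 0 ≤ L' (f * f)) ∧ (∀ u ∈ momKer L (s + 1), ∀ f, L' (f * u) = 0) := by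
  obtain ⟨U, hU⟩ : ∃ U : Submodule ℝ (MP n), ∀ p, p ∈ U ↔ p ∈ momKer L (s + 1) := by
    refine ⟨(LinearMap.ker (momBil L (s+1))).map (RxT n (s+1)).subtype, fun p => ?_⟩
    constructor
    · rintro ⟨q, hq, rfl⟩; exact (aux_ker_momBil _ _ _).1 hq
    · intro hp
      exact ⟨⟨p, (mem_restrictTotalDegree _ _ _).2 hp.1⟩, (aux_ker_momBil _ _ _).2 hp, rfl⟩
  have hU' := fun p => (hU p).trans (aux_mem_momKer L (s+1) p)
  obtain ⟨c, hc⟩ := exists_isCompl (U ⊓ RxT n s)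
  obtain ⟨B, hB⟩ : ∃ B, B = c ⊓ RxT n s := ⟨_, rfl⟩
  have hdeg : ∀ b ∈ B, b.totalDegree ≤ s := fun b hb => by
    rw [hB] at hb; exact (mem_restrictTotalDegree _ _ _).1 hb.2
  have hUB : Disjoint U B := by
    rw [disjoint_iff, eq_bot_iff]
    intro x hx
    rw [hB] at hx
    have : x ∈ (U ⊓ RxT n s) ⊓ c := ⟨⟨hx.1, hx.2.2⟩, hx.2.1⟩
    rwa [hc.inf_eq_bot] at this
  have hdec : ∀ p : MP n, p.totalDegree ≤ s + 1 → ∃ b ∈ B, p - b ∈ U := by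
    intro p hp
    obtain ⟨q, hq, hpq⟩ := hflat p hp
    have hqt : q ∈ (U ⊓ RxT n s) ⊔ c := by rw [hc.sup_eq_top]; trivial
    obtain ⟨u, hu, b, hb, hub⟩ := Submodule.mem_sup.1 hqt
    refine ⟨b, ?_, ?_⟩
    · rw [hB]
      refine ⟨hb, ?_⟩
      have : b = q - u := by rw [← hub]; ring
      rw [this]
      exact Submodule.sub_mem _ ((mem_restrictTotalDegree _ _ _).2 hq) hu.2
    · have : p - b = (p - q) + u := by rw [← hub]; ring
      rw [this]
      exact Submodule.add_mem _ ((hU _).2 hpq) hu.1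
  obtain ⟨C', hUC, hCB⟩ := hUB.exists_isCompl
  obtain ⟨P, hPB, hPU⟩ : ∃ P : MP n →ₗ[ℝ] B, (∀ b : B, P b = b) ∧ ∀ u ∈ U, P u = 0 := by
    refine ⟨B.projectionOnto C' hCB.symm, fun b => ?_, fun u hu => ?_⟩
    · simp
    · have := hUC hu
      simpa using this
  have hPsub : ∀ p : MP n, p.totalDegree ≤ s + 1 → p - P p ∈ U := by
    intro p hp
    obtain ⟨b, hb, hpb⟩ := hdec p hp
    have h1 := hPU _ hpb
    rw [map_sub, sub_eq_zero] at h1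
    have h2 := hPB ⟨b, hb⟩
    simp only at h2
    rw [h1, h2]; exact hpb
  have hdegP : ∀ b : B, (b : MP n).totalDegree ≤ s := fun b => hdeg b b.2
  have hdegX : ∀ (i : Fin n) (p : MP n), p.totalDegree ≤ s → (X i * p).totalDegree ≤ s + 1 := by
    intro i p hp
    have := totalDegree_mul (X i : MP n) p
    rw [totalDegree_X] at this; omega
  have fact1 : ∀ p q : MP n, p.totalDegree ≤ s + 1 → q.totalDegree ≤ s + 1 →
      L (P p * q) = L (p * q) := by
    intro p q hp hq
    have := ((hU' _).1 (hPsub p hp)).2 q hq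
    rw [sub_mul, map_sub, sub_eq_zero] at this
    exact this.symm
  have fact1' : ∀ p q : MP n, p.totalDegree ≤ s + 1 → q.totalDegree ≤ s + 1 →
      L (q * P p) = L (q * p) := by
    intro p q hp hq
    rw [mul_comm, fact1 p q hp hq, mul_comm]
  have nondeg : ∀ b : B, (∀ d : B, L ((b : MP n) * d) = 0) → b = 0 := by
    intro b hb
    have : (b : MP n) ∈ U := by
      rw [hU']
      refine ⟨(hdegP b).trans (by omega), fun q hq => ?_⟩
      rw [← fact1' q b hq ((hdegP b).trans (by omega))]
      exact hb _
    have h0 : (b : MP n) ∈ U ⊓ B := ⟨this, b.2⟩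
    rw [hUB.eq_bot] at h0
    exact Subtype.ext h0
  have factX : ∀ (i : Fin n) (u : MP n), u ∈ U → u.totalDegree ≤ s → X i * u ∈ U := by
    intro i u hu hus
    rw [hU']
    refine ⟨hdegX i u hus, fun q hq => ?_⟩
    rw [← fact1' q _ hq (hdegX i u hus), mul_comm (X i) u, mul_assoc]
    exact ((hU' u).1 hu).2 _ (hdegX i _ (hdegP _))
  let T : Fin n → Module.End ℝ B := fun i => P ∘ₗ LinearMap.mulLeft ℝ (X i) ∘ₗ B.subtype
  have hTdef : ∀ i (b : B), T i b = P (X i * (b : MP n)) := fun i b => rfl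
  have fact2 : ∀ i (b : B) (q : MP n), q.totalDegree ≤ s + 1 →
      L ((T i b : MP n) * q) = L (X i * (b : MP n) * q) := by
    intro i b q hq
    rw [hTdef]
    exact fact1 _ q (hdegX i _ (hdegP b)) hq
  have hT : ∀ i j, T i * T j = T j * T i := by
    have key : ∀ i j (b d : B), L ((((T i * T j) b : B) : MP n) * (d : MP n)) = L (X i * X j * (b : MP n) * (d : MP n)) := by
      intro i j b d
      rw [Module.End.mul_apply, fact2 _ _ _ ((hdegP d).trans (by omega)),
        show X i * ((T j b : B) : MP n) * (d : MP n) = ((T j b : B) : MP n) * (X i * (d : MP n)) by ring,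
        fact2 _ _ _ (hdegX i _ (hdegP d))]
      congr 1; ring
    intro i j
    refine LinearMap.ext fun b => sub_eq_zero.1 (nondeg _ fun d => ?_)
    rw [Submodule.coe_sub, sub_mul, map_sub, key, key, mul_comm (X i : MP n) (X j), sub_self]
  obtain ⟨φ, hφ⟩ := aux_aeval T hT
  have sadj : ∀ (f : MP n) (b d : B), L ((φ f b : B) * (d : MP n)) = L ((b : MP n) * (φ f d : B)) := by
    intro f
    induction f using MvPolynomial.induction_on with
    | C a =>
      intro b d
      have : φ (C a) = algebraMap ℝ _ a := φ.commutes a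
      rw [this]
      simp [Module.algebraMap_end_apply]
    | add p q hp hq =>
      intro b d
      simp only [map_add, LinearMap.add_apply, Submodule.coe_add, add_mul, mul_add, hp, hq]
    | mul_X p i hp =>
      intro b d
      have e1 : φ (p * X i) b = φ p (T i b) := by rw [map_mul, hφ]; rfl
      have e2 : φ (p * X i) d = T i (φ p d) := by rw [mul_comm, map_mul, hφ]; rfl
      rw [e1, e2, hp, fact2 _ _ _ ((hdegP _).trans (by omega)), mul_comm (b : MP n),
        fact2 _ _ _ ((hdegP _).trans (by omega))]
      congr 1; ring
  let ρ : MP n →ₗ[ℝ] B := (LinearMap.applyₗ (P 1)) ∘ₗ φ.toLinearMap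
  have hρ : ∀ f, ρ f = φ f (P 1) := fun f => rfl
  have hmon : ∀ k, k ≤ s + 1 → ∀ a : Fin n →₀ ℕ, mdeg a ≤ k →
      ρ (monomial a 1) = P (monomial a 1) := by
    intro k
    induction k with
    | zero =>
      intro _ a ha
      by_cases h0 : a = 0
      · subst h0
        rw [hρ, show (monomial (0 : Fin n →₀ ℕ) (1:ℝ)) = 1 from rfl, map_one]; rfl
      · obtain ⟨i, b, rfl⟩ := aux_split_one a h0
        rw [aux_mdeg_add, aux_mdeg_single] at ha; omega
    | succ k ih =>
      intro hk a ha
      by_cases h0 : a = 0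
      · exact ih (by omega) a (by rw [h0, aux_mdeg_zero]; omega)
      · obtain ⟨i, b, rfl⟩ := aux_split_one a h0
        rw [aux_mdeg_add, aux_mdeg_single] at ha
        have hb := ih (by omega) b (by omega)
        have hm : (monomial (b + Finsupp.single i 1) (1 : ℝ)) = X i * monomial b 1 := by
          rw [X, monomial_mul, add_comm]; simp
        have hbs : (monomial b (1:ℝ)).totalDegree ≤ s := by rw [aux_deg_mon]; omega
        have e1 : ρ (X i * monomial b 1) = T i (ρ (monomial b 1)) := by
          rw [hρ, map_mul, hφ]; rfl
        rw [hm, e1, hb, hTdef]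
        have h4 := hPU _ (factX i _ (hPsub (monomial b 1) (by omega))
          ((mem_restrictTotalDegree _ _ _).1 (Submodule.sub_mem _
            ((mem_restrictTotalDegree _ _ _).2 hbs)
            ((mem_restrictTotalDegree _ _ _).2 (hdegP _)))))
        rw [mul_sub, map_sub, sub_eq_zero] at h4
        exact h4.symm
  have hρP : ∀ f : MP n, f.totalDegree ≤ s + 1 → ρ f = P f := by
    intro f hf
    have := aux_mon_ext (ρ - P) (s + 1) (fun a ha => by
      rw [LinearMap.sub_apply, hmon _ le_rfl a ha, sub_self]) f hf
    rwa [LinearMap.sub_apply, sub_eq_zero] at this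
  let L' : Module.Dual ℝ (MP n) := L ∘ₗ LinearMap.mulLeft ℝ (P 1 : MP n) ∘ₗ B.subtype ∘ₗ ρ
  have hL' : ∀ f g, L' (f * g) = L ((ρ f : MP n) * ρ g) := by
    intro f g
    have : L' (f * g) = L ((P 1 : MP n) * (ρ (f * g) : B)) := rfl
    rw [this, hρ, map_mul φ, Module.End.mul_apply, ← sadj, hρ f, hρ g]
  refine ⟨L', fun f hf => ?_, fun f => ?_, fun u hu f => ?_⟩
  · have := aux_mon_ext (L' - L) (2 * (s + 1)) (fun a ha => ?_) f hf
    · rwa [LinearMap.sub_apply, sub_eq_zero] at this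
    · obtain ⟨β, δ, rfl, h1, h2⟩ := aux_split (s + 1) (s + 1) a (by omega)
      have hm : (monomial (β + δ) (1 : ℝ)) = monomial β 1 * monomial δ 1 := by
        rw [monomial_mul]; simp
      have d1 : (monomial β (1:ℝ)).totalDegree ≤ s + 1 := by rwa [aux_deg_mon]
      have d2 : (monomial δ (1:ℝ)).totalDegree ≤ s + 1 := by rwa [aux_deg_mon]
      rw [LinearMap.sub_apply, hm, hL', hρP _ d1, hρP _ d2, fact1 _ _ d1 ((hdegP _).trans (by omega)),
        fact1' _ _ d2 d1, sub_self]
  · rw [hL']; exact hL _ ((hdegP _).trans (by omega))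
  · rw [hL', hρP u hu.1, hPU u ((hU u).2 hu)]; simp

lemma aux_flat_ext {n : ℕ} (L : Module.Dual ℝ (MP n)) (s : ℕ) (hL : momPSD L s)
    (hflat : ∀ p : MP n, p.totalDegree ≤ s → ∃ q : MP n, q.totalDegree ≤ s - 1 ∧
      p - q ∈ momKer L s) :
    ∃ L' : Module.Dual ℝ (MP n), (∀ f : MP n, f.totalDegree ≤ 2 * s → L' f = L f) ∧
      (∀ f, 0 ≤ L' (f * f)) ∧ (∀ u ∈ momKer L s, ∀ f, L' (f * u) = 0) := by
  cases s with
  | succ s => exact aux_flat_ext_pos L s hL hflat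
  | zero =>
    have hC : ∀ c : ℝ, L (C c) = L 1 * c := by
      intro c
      rw [show (C c : MP n) = c • 1 by rw [smul_eq_C_mul, mul_one], map_smul, smul_eq_mul, mul_comm]
    have h1 : 0 ≤ L 1 := by simpa using hL 1 (by simp)
    let L' : Module.Dual ℝ (MP n) := L 1 • (aeval (R := ℝ) (fun _ : Fin n => (0:ℝ))).toLinearMap
    have hL' : ∀ f, L' f = L 1 * eval (fun _ => 0) f := by
      intro f; simp [L', aeval_eq_eval]
    refine ⟨L', fun f hf => ?_, fun f => ?_, fun u hu f => ?_⟩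
    · obtain ⟨c, rfl⟩ : ∃ c, f = C c := ⟨_, totalDegree_eq_zero_iff_eq_C.1 (by omega)⟩
      rw [hL', hC, eval_C]
    · rw [hL', map_mul]; exact mul_nonneg h1 (mul_self_nonneg _)
    · obtain ⟨c, rfl⟩ : ∃ c, u = C c := ⟨_, totalDegree_eq_zero_iff_eq_C.1 (by have := hu.1; omega)⟩
      have := ((aux_mem_momKer _ _ _).1 hu).2 1 (by simp)
      rw [mul_one, hC] at this
      rw [hL', map_mul, eval_C]
      linear_combination (eval (fun _ => 0) f) * this

lemma aux_Lstar_mem {n m t : ℕ} (h : Fin m → MP n) (L : Module.Dual ℝ (MP n))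
    (hL : L ∈ Kpos h t) : L ∈ annih (Hset h t ∪ Wset h t L) := by
  rw [aux_mem_annih]
  rintro g (hg | ⟨α, g, hα, hg, rfl⟩)
  · exact hL.1 g hg
  · rw [mul_comm]; exact hg.2 α hα

lemma aux_lower {n m s t : ℕ} (h : Fin m → MP n)
    (hD : ∀ j, (h j).totalDegree ≤ s) (hst : s ≤ t / 2)
    (L : Module.Dual ℝ (MP n)) (hgen : Generic h t L)
    (hflat : ∀ p : MP n, p.totalDegree ≤ s → ∃ q : MP n, q.totalDegree ≤ s - 1 ∧
      p - q ∈ momKer L s) :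
    momRank L (s - 1) ≤ dimProj (s - 1) (plusOp (Hset h t ∪ Wset h t L)) := by
  have hLs : momPSD L s := fun p hp => hgen.1.2 p (by omega)
  obtain ⟨L', h1, h2, h3⟩ := aux_flat_ext L s hLs hflat
  have hh : ∀ j f, L' (f * h j) = 0 := by
    intro j f
    refine h3 _ ⟨hD j, fun β hβ => ?_⟩ f
    rw [mul_comm]
    exact hgen.1.1 _ ⟨β, j, by have := hD j; omega, rfl⟩
  have hK : L' ∈ Kpos h t := by
    refine ⟨?_, fun p _ => h2 p⟩
    rintro _ ⟨α, j, -, rfl⟩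
    exact hh j _
  have hN := aux_generic h L L' hgen hK
  have hg : ∀ g ∈ momKer L (t / 2), ∀ f, L' (f * g) = 0 := by
    intro g hg f
    have h0 := (aux_momKer_psd L' (t / 2) hK.2 g hg.1).1 (hN hg)
    rw [mul_comm]
    exact aux_psd L' (max g.totalDegree f.totalDegree) (fun p _ => h2 p) g f
      (le_max_left _ _) (le_max_right _ _) h0
  have hG : ∀ g ∈ Hset h t ∪ Wset h t L, ∀ f, L' (f * g) = 0 := by
    rintro g (⟨α, j, -, rfl⟩ | ⟨α, g, hα, hgg, rfl⟩) f
    · rw [← mul_assoc]; exact hh j _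
    · rw [← mul_assoc]; exact hg g hgg _
  unfold momRank dimProj
  apply Submodule.finrank_mono
  rintro _ ⟨p, rfl⟩
  refine ⟨L' ∘ₗ LinearMap.mulLeft ℝ (p : MP n), ?_, ?_⟩
  · refine (aux_mem_annih _ _).2 ?_
    intro g hg
    rcases hg with hg | hg
    · exact hG g hg _
    · obtain ⟨i, g, hg2, rfl⟩ := Set.mem_iUnion.1 hg
      change L' ((p : MP n) * (X i * g)) = 0
      rw [← mul_assoc]; exact hG g hg2 _
  · ext q
    change L' ((p : MP n) * q) = L ((p : MP n) * q)
    apply h1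
    have hp := (mem_restrictTotalDegree _ _ _).1 p.2
    have hq := (mem_restrictTotalDegree _ _ _).1 q.2
    have := totalDegree_mul (p : MP n) q
    omega

lemma aux_upper {n m s t : ℕ} (h : Fin m → MP n) (hst : s ≤ t / 2)
    (L : Module.Dual ℝ (MP n)) (hL : L ∈ Kpos h t)
    (hflat : ∀ p : MP n, p.totalDegree ≤ s → ∃ q : MP n, q.totalDegree ≤ s - 1 ∧
      p - q ∈ momKer L s) :
    dimProj (2 * s) (Hset h t ∪ Wset h t L) ≤ momRank L (s - 1) := by
  have hpsd : ∀ a ≤ t / 2, momPSD L a := fun a ha p hp => hL.2 p (by omega)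
  have hker : ∀ a ≤ t / 2, ∀ p ∈ momKer L a, p ∈ momKer L (t / 2) := by
    intro a ha p hp
    rw [aux_momKer_psd L _ hL.2 p (hp.1.trans ha)]
    exact (aux_momKer_psd L a (hpsd a ha) p hp.1).1 hp
  have hW : ∀ Λ ∈ annih (Hset h t ∪ Wset h t L), ∀ a ≤ t / 2, ∀ p ∈ momKer L a,
      ∀ β : Fin n →₀ ℕ, mdeg β ≤ t / 2 → Λ (monomial β 1 * p) = 0 := by
    intro Λ hΛ a ha p hp β hβ
    exact (aux_mem_annih _ _).1 hΛ _ (Or.inr ⟨β, p, hβ, hker a ha p hp, rfl⟩)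
  have heq : dimProj (2 * s) (Hset h t ∪ Wset h t L) = dimProj (s - 1) (Hset h t ∪ Wset h t L) := by
    rw [(aux_dimProj (s - 1) (2 * s) (by omega) _).2]
    intro Λ hΛ h0
    have key : ∀ k, k ≤ s → ∀ β : Fin n →₀ ℕ, mdeg β ≤ k → ∀ p : MP n, p.totalDegree ≤ s →
        Λ (monomial β 1 * p) = 0 := by
      intro k
      induction k with
      | zero =>
        intro _ β hβ p hp
        obtain ⟨q, hq, hpq⟩ := hflat p hp
        by_cases hb : β = 0
        · subst hb
          have e := hW Λ hΛ s hst _ hpq 0 (by rw [aux_mdeg_zero]; omega)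
          rw [show (monomial (0 : Fin n →₀ ℕ) (1:ℝ)) = 1 from rfl, one_mul] at e ⊢
          rw [map_sub, h0 q hq, sub_zero] at e
          exact e
        · obtain ⟨i, b, rfl⟩ := aux_split_one β hb
          rw [aux_mdeg_add, aux_mdeg_single] at hβ; omega
      | succ k ih =>
        intro hk β hβ p hp
        by_cases hb : β = 0
        · exact ih (by omega) β (by rw [hb, aux_mdeg_zero]; omega) p hp
        obtain ⟨q, hq, hpq⟩ := hflat p hp
        have e := hW Λ hΛ s hst _ hpq β (by omega)
        rw [mul_sub, map_sub, sub_eq_zero] at e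
        rw [e]
        obtain ⟨i, b, rfl⟩ := aux_split_one β hb
        rw [aux_mdeg_add, aux_mdeg_single] at hβ
        have hm : (monomial (b + Finsupp.single i 1) (1 : ℝ)) * q = monomial b 1 * (X i * q) := by
          rw [X, ← mul_assoc, monomial_mul]; simp
        rw [hm]
        refine ih (by omega) b (by omega) _ ?_
        have := totalDegree_mul (X i : MP n) q
        rw [totalDegree_X] at this; omega
    refine aux_mon_ext Λ (2 * s) fun a ha => ?_
    obtain ⟨β, δ, rfl, h1, h2⟩ := aux_split s s a (by omega)
    have hm : (monomial (β + δ) (1 : ℝ)) = monomial β 1 * monomial δ 1 := by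
      rw [monomial_mul]; simp
    rw [hm]
    exact key s le_rfl β h1 _ (by rwa [aux_deg_mon])
  rw [heq]
  unfold dimProj momRank
  rw [← LinearMap.finrank_range_dualMap_eq_finrank_range,
    LinearMap.range_dualMap_eq_dualAnnihilator_ker]
  apply Submodule.finrank_mono
  rintro _ ⟨Λ, hΛ, rfl⟩
  rw [Submodule.mem_dualAnnihilator]
  intro p hp
  have := hW Λ hΛ (s - 1) (by omega) p ((aux_ker_momBil _ _ _).1 hp) 0
    (by rw [aux_mdeg_zero]; omega)
  rw [show (monomial (0 : Fin n →₀ ℕ) (1:ℝ)) = 1 from rfl, one_mul] at this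
  exact this

lemma aux_backward {n s : ℕ} (G : Set (MP n)) (L : Module.Dual ℝ (MP n)) (hL : L ∈ annih G)
    (h1 : dimProj (2 * s) G = dimProj (s - 1) G)
    (h2 : dimProj (2 * s) G = dimProj (2 * s) (plusOp G)) :
    ∀ p : MP n, p.totalDegree ≤ s → ∃ q : MP n, q.totalDegree ≤ s - 1 ∧
      p - q ∈ momKer L s := by
  intro p hp
  rw [(aux_dimProj (s - 1) (2 * s) (by omega) _).2] at h1
  have h2 := (aux_dimProj_anti (2 * s) G (plusOp G) Set.subset_union_left).2 h2
  have hmem : p ∈ Submodule.span ℝ G ⊔ RxT n (s - 1) := by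
    rw [← Subspace.forall_mem_dualAnnihilator_apply_eq_zero_iff]
    intro Λ hΛ
    rw [Submodule.dualAnnihilator_sup_eq] at hΛ
    refine h1 Λ hΛ.1 (fun q hq => ?_) p (by omega)
    exact (Submodule.mem_dualAnnihilator _).1 hΛ.2 q ((mem_restrictTotalDegree _ _ _).2 hq)
  obtain ⟨g, hg, q, hq, hgq⟩ := Submodule.mem_sup.1 hmem
  have hq := (mem_restrictTotalDegree _ _ _).1 hq
  have hpq : p - q = g := by rw [← hgq]; ring
  have hgd : g.totalDegree ≤ s := by
    rw [← hpq]
    exact (totalDegree_sub _ _).trans (max_le hp (by omega))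
  refine ⟨q, hq, ?_⟩
  rw [hpq]
  refine ⟨hgd, ?_⟩
  have key : ∀ k, k ≤ s → ∀ β : Fin n →₀ ℕ, mdeg β ≤ k → ∀ Λ ∈ annih G,
      Λ (g * monomial β 1) = 0 := by
    intro k
    induction k with
    | zero =>
      intro _ β hβ Λ hΛ
      by_cases hb : β = 0
      · subst hb
        rw [show (monomial (0 : Fin n →₀ ℕ) (1:ℝ)) = 1 from rfl, mul_one]
        exact (Submodule.mem_dualAnnihilator _).1 hΛ g hg
      · obtain ⟨i, b, rfl⟩ := aux_split_one β hb
        rw [aux_mdeg_add, aux_mdeg_single] at hβ; omega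
    | succ k ih =>
      intro hk β hβ Λ hΛ
      by_cases hb : β = 0
      · exact ih (by omega) β (by rw [hb, aux_mdeg_zero]; omega) Λ hΛ
      have hd : (g * monomial β (1:ℝ)).totalDegree ≤ 2 * s := by
        have := totalDegree_mul g (monomial β (1:ℝ))
        rw [aux_deg_mon] at this; omega
      obtain ⟨i, b, rfl⟩ := aux_split_one β hb
      rw [aux_mdeg_add, aux_mdeg_single] at hβ
      obtain ⟨Λ', hΛ', he⟩ := h2 Λ hΛ
      rw [← he _ hd]
      have hm : g * (monomial (b + Finsupp.single i 1) (1 : ℝ)) = X i * (g * monomial b 1) := by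
        rw [mul_left_comm, X, monomial_mul, add_comm]; simp
      rw [hm]
      have hX : Λ' ∘ₗ LinearMap.mulLeft ℝ (X i : MP n) ∈ annih G := by
        refine (aux_mem_annih _ _).2 ?_
        intro f hf
        exact (aux_mem_annih _ _).1 hΛ' _ (Or.inr (Set.mem_iUnion.2 ⟨i, f, hf, rfl⟩))
      exact ih (by omega) b (by omega) _ hX
  intro β hβ
  exact key s le_rfl β hβ L hL

/-- Let `D ≤ s ≤ ⌊t/2⌋`, `L*` generic in `K_{t,⪰}`, `G_t = H_t ∪ W_t`.
Then `rank M_s(L*) = rank M_{s−1}(L*)` holds iff both `dim π_{2s}(G_t^⊥) = dim π_{s−1}(G_t^⊥)`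
and `dim π_{2s}(G_t^⊥) = dim π_{2s}((G_t⁺)^⊥)` hold; and these conditions imply
`dim π_s(G_t^⊥) = dim π_{s−1}(G_t^⊥)` and `dim π_s(G_t^⊥) = dim π_s((G_t⁺)^⊥)`. -/
theorem rank_iff_dim_conditions {n m s t : ℕ} (h : Fin m → MP n)
    (hD : ∀ j, (h j).totalDegree ≤ s) (hst : s ≤ t / 2)
    (Lstar : Module.Dual ℝ (MP n)) (hgen : Generic h t Lstar) :
    (momRank Lstar s = momRank Lstar (s - 1) ↔
      (dimProj (2 * s) (Hset h t ∪ Wset h t Lstar) =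
          dimProj (s - 1) (Hset h t ∪ Wset h t Lstar) ∧
        dimProj (2 * s) (Hset h t ∪ Wset h t Lstar) =
          dimProj (2 * s) (plusOp (Hset h t ∪ Wset h t Lstar)))) ∧
    ((dimProj (2 * s) (Hset h t ∪ Wset h t Lstar) =
          dimProj (s - 1) (Hset h t ∪ Wset h t Lstar) ∧
        dimProj (2 * s) (Hset h t ∪ Wset h t Lstar) =
          dimProj (2 * s) (plusOp (Hset h t ∪ Wset h t Lstar))) →
      (dimProj s (Hset h t ∪ Wset h t Lstar) =
          dimProj (s - 1) (Hset h t ∪ Wset h t Lstar) ∧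
        dimProj s (Hset h t ∪ Wset h t Lstar) =
          dimProj s (plusOp (Hset h t ∪ Wset h t Lstar)))) := by
  set G := Hset h t ∪ Wset h t Lstar with hG
  have hpsd : momPSD Lstar s := fun p hp => hgen.1.2 p (by omega)
  have hiff := aux_flat_iff Lstar s (s - 1) (by omega) hpsd
  have hsub : G ⊆ plusOp G := Set.subset_union_left
  have a1 := (aux_dimProj (s - 1) s (by omega) G).1
  have a2 := (aux_dimProj s (2 * s) (by omega) G).1
  have b1 := (aux_dimProj (s - 1) s (by omega) (plusOp G)).1
  have b2 := (aux_dimProj s (2 * s) (by omega) (plusOp G)).1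
  have c1 := (aux_dimProj_anti (s - 1) G (plusOp G) hsub).1
  have c2 := (aux_dimProj_anti s G (plusOp G) hsub).1
  have c3 := (aux_dimProj_anti (2 * s) G (plusOp G) hsub).1
  have back : (dimProj (2 * s) G = dimProj (s - 1) G ∧
      dimProj (2 * s) G = dimProj (2 * s) (plusOp G)) →
      momRank Lstar s = momRank Lstar (s - 1) := fun hh =>
    hiff.2 (aux_backward G Lstar (aux_Lstar_mem h Lstar hgen.1) hh.1 hh.2)
  have fwd : momRank Lstar s = momRank Lstar (s - 1) →
      dimProj (2 * s) G ≤ dimProj (s - 1) (plusOp G) := fun hr =>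
    (aux_upper h hst Lstar hgen.1 (hiff.1 hr)).trans (aux_lower h hD hst Lstar hgen (hiff.1 hr))
  refine ⟨⟨fun hr => ?_, back⟩, fun hh => ?_⟩
  · have := fwd hr
    constructor <;> omega
  · have := fwd (back hh)
    constructor <;> omega
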